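/- Let l, k be coprime integers with 1 ≤ l < k and k ≥ 2, and set α = l/k. Among the rationals in [0,1] whose reduced denominator is strictly less than k, let α1 be the largest one smaller than α and α2 the smallest one larger than α. Let ε be a real number with 0 ≤ ε < min(α − α1, α2 − α). Then for every positive integer n there exist n step-function probability measures μ_1, ..., μ_n on [0,1] such that for every natural number m and every set A ⊆ [0,1] achievable with m cuts, if |μ_i(A) − l/k| ≤ ε for every i ∈ {1, ..., n}, then m ≥ 2·(k−1)·n/k − k (as real numbers). -/

import Mathlib

/-!
Bézout's identity gives fractions `p₁ / q₁ < l / k < p₂ / q₂` with `q₁ + q₂ = k`, `p₁ + p₂ = l` and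
determinant `q₁ p₂ - q₂ p₁ = 1`. Both denominators are `< k`, so a value within `ε` of `l / k` lies
strictly between the two fractions.

Cut `[0,1]` into consecutive cells. A group of `k` measures consists of `q₂` measures averaging over
`q₁` even cells each and `q₁` measures averaging over `q₂` odd cells each. Let `e` be the state (`1`
in `A`, `0` outside) at the cell boundaries. A cell of which `A` occupies the fraction `F`, with
boundary states `e, e'`, contains at least `2 ⌈F⌉ - e - e'` and at least `e + e' - 2 ⌊F⌋` cuts.
Using the first bound on even and the second on odd cells, the boundary states telescope. A measure
on even cells has value `> p₁ / q₁`, so its `⌈F⌉` sum to at least `p₁ + 1`; a measure on odd cells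
has value `< p₂ / q₂`, so its `⌊F⌋` sum to at most `p₂ - 1`. Hence a group forces
`2 q₂ (p₁ + 1) - 2 q₁ (p₂ - 1) = 2 (k - 1)` cuts, and the two ends of the line cost at most `1`
altogether. The `n % k` measures outside the full groups get one cell each, which must contain a
cut.
-/

open MeasureTheory
open scoped ENNReal

/-- A step-function probability measure on `[0,1]`: a Borel probability measure on `ℝ`
that is absolutely continuous w.r.t. Lebesgue measure with a piecewise constant density
supported in `[0,1]`. -/
def IsStepMeasure (μ : Measure ℝ) : Prop :=
  IsProbabilityMeasure μ ∧
  ∃ (n : ℕ) (a b : Fin n → ℝ) (c : Fin n → ℝ≥0∞),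
    (∀ i, 0 ≤ a i ∧ b i ≤ 1) ∧
    μ = volume.withDensity
      (fun x => ∑ i, Set.indicator (Set.Ico (a i) (b i)) (fun _ => c i) x)

/-- `A ⊆ [0,1]` is achievable with `m` cuts: there are points
`0 = y_0 ≤ y_1 ≤ ... ≤ y_m ≤ y_{m+1} = 1` such that `A` is the union of some
subcollection of the `m+1` closed intervals determined by these points. -/
def AchievableWithCuts (m : ℕ) (A : Set ℝ) : Prop :=
  ∃ y : Fin (m + 2) → ℝ, Monotone y ∧ y 0 = 0 ∧ y (Fin.last (m + 1)) = 1 ∧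
    ∃ S : Finset (Fin (m + 1)), A = ⋃ i ∈ S, Set.Icc (y i.castSucc) (y i.succ)

section FareyNeighbours

variable {K : Type*} [Field K] [LinearOrder K] [IsStrictOrderedRing K] {a b c d : K}

lemma div_lt_mediant (hb : 0 < b) (hd : 0 < d) (h : a / b < c / d) :
    a / b < (a + c) / (b + d) := by
  rw [div_lt_div_iff₀ hb hd] at h
  rw [div_lt_div_iff₀ hb (add_pos hb hd)]
  linarith

lemma mediant_lt_div (hb : 0 < b) (hd : 0 < d) (h : a / b < c / d) :
    (a + c) / (b + d) < c / d := by
  rw [div_lt_div_iff₀ hb hd] at h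
  rw [div_lt_div_iff₀ (add_pos hb hd) hd]
  linarith

lemma exists_farey_neighbours {l k : ℕ} (hlk : l < k) (hk : 1 < k) (hcop : Nat.Coprime l k) :
    ∃ p₁ q₁ p₂ q₂ : ℕ, 0 < q₁ ∧ 0 < q₂ ∧ q₁ + q₂ = k ∧ p₂ ≤ q₂ ∧ q₁ * p₂ = q₂ * p₁ + 1 ∧
      (p₁ / q₁ : ℚ) < l / k ∧ (l / k : ℚ) < p₂ / q₂ := by
  obtain ⟨q₁, hq₁k, hmod⟩ := Nat.exists_mul_mod_eq_one_of_coprime hcop hk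
  obtain ⟨q₂, rfl⟩ := Nat.exists_eq_add_of_lt hq₁k
  have hq₁ : 0 < q₁ := Nat.pos_of_ne_zero fun h => by simp [h] at hmod
  have hbezout := hmod ▸ Nat.div_add_mod (l * q₁) (q₁ + q₂ + 1)
  generalize l * q₁ / (q₁ + q₂ + 1) = p₁ at hbezout
  obtain ⟨p₂, rfl⟩ : ∃ p₂, l = p₁ + p₂ := Nat.exists_eq_add_of_le (by nlinarith)
  have hdet : q₁ * p₂ = (q₂ + 1) * p₁ + 1 := by linarith
  have hlt : (p₁ / q₁ : ℚ) < p₂ / (q₂ + 1 : ℕ) := by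
    rw [div_lt_div_iff₀ (by positivity) (by positivity)]
    exact_mod_cast (by linarith : p₁ * (q₂ + 1) < p₂ * q₁)
  refine ⟨p₁, q₁, p₂, q₂ + 1, hq₁, q₂.succ_pos, (add_assoc ..).symm, by nlinarith, hdet, ?_, ?_⟩
  · exact_mod_cast div_lt_mediant (by positivity) (by positivity) hlt
  · exact_mod_cast mediant_lt_div (by positivity) (by positivity) hlt

lemma den_natCast_div_natCast_le (p : ℕ) {q : ℕ} (hq : 0 < q) : ((p : ℚ) / q).den ≤ q := by
  have h := Rat.den_dvd p q
  rw [Rat.divInt_eq_div, Int.cast_natCast, Int.cast_natCast, Int.natCast_dvd_natCast] at h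
  exact Nat.le_of_dvd hq h

end FareyNeighbours

section Averages

open ProbabilityTheory

/-- The average of the uniform probability measures on the cells `[x j, x (j + 1))` with `j` among
`pos 0, …, pos (d - 1)`. -/
noncomputable def cellAverage (x : ℕ → ℝ) {d : ℕ} (pos : Fin d → ℕ) : Measure ℝ :=
  (d : ℝ≥0∞)⁻¹ • ∑ s, volume[|Set.Ico (x (pos s)) (x (pos s + 1))]

/-- The fraction of the cell `[x j, x (j + 1))` that is occupied by `A`. -/
noncomputable def cellFraction (x : ℕ → ℝ) (A : Set ℝ) (j : ℕ) : ℝ :=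
  volume[|Set.Ico (x j) (x (j + 1))].real A

lemma cellFraction_congr_ae {A B : Set ℝ} (h : A =ᵐ[volume] B) (x : ℕ → ℝ) :
    cellFraction x A = cellFraction x B :=
  funext fun _ => measureReal_congr (cond_absolutelyContinuous.ae_eq h)

lemma mul_real_cellAverage (x : ℕ → ℝ) {d : ℕ} (pos : Fin d → ℕ) (A : Set ℝ) :
    d * (cellAverage x pos).real A = ∑ s, cellFraction x A (pos s) := by
  obtain rfl | hd := d.eq_zero_or_pos
  · simp
  have hd' : (d : ℝ) ≠ 0 := by positivity
  have h : (∑ s, volume[|Set.Ico (x (pos s)) (x (pos s + 1))]).real A =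
      ∑ s, cellFraction x A (pos s) := by
    simp only [Measure.real, Measure.finsetSum_apply, cellFraction]
    exact ENNReal.toReal_sum fun s _ => measure_ne_top _ _
  rw [cellAverage, measureReal_ennreal_smul_apply, h, ENNReal.toReal_inv, ENNReal.toReal_natCast,
    mul_inv_cancel_left₀ hd']

lemma add_one_le_sum_ceil_cellFraction {x : ℕ → ℝ} {A : Set ℝ} {d : ℕ} {pos : Fin d → ℕ} {p : ℤ}
    (h : p < d * (cellAverage x pos).real A) : p + 1 ≤ ∑ s, ⌈cellFraction x A (pos s)⌉ := by
  rw [mul_real_cellAverage] at h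
  have hle := h.trans_le (Finset.sum_le_sum fun s _ => Int.le_ceil (cellFraction x A (pos s)))
  exact_mod_cast hle

lemma sum_floor_cellFraction_le_sub_one {x : ℕ → ℝ} {A : Set ℝ} {d : ℕ} {pos : Fin d → ℕ} {p : ℤ}
    (h : d * (cellAverage x pos).real A < p) : ∑ s, ⌊cellFraction x A (pos s)⌋ ≤ p - 1 := by
  rw [mul_real_cellAverage] at h
  have hle := (Finset.sum_le_sum fun s _ => Int.floor_le (cellFraction x A (pos s))).trans_lt h
  exact Int.le_sub_one_of_lt (by exact_mod_cast hle)

lemma cellAverage_eq_withDensity (x : ℕ → ℝ) {d : ℕ} (pos : Fin d → ℕ) :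
    cellAverage x pos = volume.withDensity fun t => ∑ s,
      (Set.Ico (x (pos s)) (x (pos s + 1))).indicator
        (fun _ => (d : ℝ≥0∞)⁻¹ * (volume (Set.Ico (x (pos s)) (x (pos s + 1))))⁻¹) t := by
  ext A hA
  rw [withDensity_apply _ hA, lintegral_finsetSum]
  · simp only [cellAverage, Measure.smul_apply, Measure.finsetSum_apply, smul_eq_mul,
      Finset.mul_sum, cond_apply measurableSet_Ico, lintegral_indicator measurableSet_Ico,
      lintegral_const, Measure.restrict_apply_univ, Measure.restrict_apply measurableSet_Ico,
      mul_assoc]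
  · exact fun s _ => measurable_const.indicator measurableSet_Ico

lemma isStepMeasure_cellAverage {x : ℕ → ℝ} (hx : StrictMono x) (hx_mem : ∀ j, x j ∈ Set.Icc 0 1)
    {d : ℕ} (hd : 0 < d) (pos : Fin d → ℕ) :
    IsStepMeasure (cellAverage x pos) := by
  refine ⟨⟨?_⟩, d, _, _, _, fun s => ⟨(hx_mem _).1, (hx_mem _).2⟩, cellAverage_eq_withDensity x pos⟩
  have hcell (j : ℕ) : IsProbabilityMeasure volume[|Set.Ico (x j) (x (j + 1))] :=
    cond_isProbabilityMeasure_of_finite (by simp [hx j.lt_succ_self]) measure_Ico_lt_top.ne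
  simp [cellAverage, ENNReal.inv_mul_cancel, hd.ne']

end Averages

section Cuts

open ProbabilityTheory

/-- The witness `c t` is the number of subdivision points `≤ t`, the endpoints included. -/
lemma AchievableWithCuts.exists_monotone_count {m : ℕ} {A : Set ℝ} (h : AchievableWithCuts m A) :
    ∃ (c : ℝ → ℕ) (S : Set ℕ), Monotone c ∧ (∀ t, 0 ≤ t → 1 ≤ c t) ∧
      (∀ t, t < 1 → c t ≤ m + 1) ∧ A =ᵐ[volume] c ⁻¹' S := by
  obtain ⟨y, hy, hy₀, hy₁, S, rfl⟩ := h
  set c : ℝ → ℕ := fun t => Finset.card {i | y i ≤ t}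
  have lt_c (t : ℝ) (i : Fin (m + 2)) : i < c t ↔ y i ≤ t :=
    Tuple.lt_card_le_iff_apply_le_of_monotone hy
  refine ⟨c, (fun i : Fin (m + 1) => (i : ℕ) + 1) '' S, fun s t hst => ?_, fun t ht => ?_,
    fun t ht => ?_, ?_⟩
  · exact Finset.card_le_card <| Finset.monotone_filter_right _ fun i _ hi => le_trans hi hst
  · exact (lt_c t 0).2 (hy₀.trans_le ht)
  · exact not_lt.1 fun hlt => (((lt_c t (Fin.last _)).1 hlt).trans_lt ht).ne hy₁
  · have hoff : ∀ᵐ t, t ∉ Set.range y :=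
      measure_eq_zero_iff_ae_notMem.1 ((Set.finite_range y).measure_zero _)
    rw [Filter.eventuallyEq_set]
    filter_upwards [hoff] with t ht
    have mem_Icc_iff (i : Fin (m + 1)) :
        t ∈ Set.Icc (y i.castSucc) (y i.succ) ↔ (i : ℕ) + 1 = c t := by
      have h_left := lt_c t i.castSucc
      have h_right := lt_c t i.succ
      have hne : t ≠ y i.succ := fun he => ht ⟨_, he.symm⟩
      rw [Set.mem_Icc, hne.le_iff_lt, ← not_le, ← h_left, ← h_right, Fin.val_castSucc, Fin.val_succ]
      omega
    simp [mem_Icc_iff]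

lemma abs_indicator_preimage_sub_le {α : Type*} [Preorder α] {c : α → ℕ} (hc : Monotone c)
    (S : Set ℕ) {s t : α} (hst : s ≤ t) :
    |(c ⁻¹' S).indicator (1 : α → ℤ) t - (c ⁻¹' S).indicator 1 s| ≤ (c t : ℤ) - c s := by
  classical
  rcases (hc hst).eq_or_lt with h | h
  · simp [Set.indicator_apply, h]
  · simp only [Set.indicator_apply, Pi.one_apply]
    rw [abs_le]
    split_ifs <;> omega

variable {Ω : Type*} [MeasurableSpace Ω]

lemma exists_mem_ceil_cond_le_indicator (μ : Measure Ω) {s : Set Ω} (hs : MeasurableSet s)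
    (hne : s.Nonempty) (T : Set Ω) :
    ∃ t ∈ s, ⌈μ[|s].real T⌉ ≤ T.indicator (1 : Ω → ℤ) t := by
  by_cases h : (s ∩ T).Nonempty
  · obtain ⟨t, hts, htT⟩ := h
    exact ⟨t, hts, by simp [htT, Int.ceil_le]⟩
  · obtain ⟨t, hts⟩ := hne
    have h0 : μ[|s].real T = 0 := by
      simp [Measure.real, cond_apply hs, Set.not_nonempty_iff_eq_empty.1 h]
    exact ⟨t, hts, by simp [h0, Set.indicator_nonneg]⟩

lemma exists_mem_indicator_le_floor_cond {μ : Measure Ω} {s : Set Ω} (hs : MeasurableSet s)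
    (hs₀ : μ s ≠ 0) (hs' : μ s ≠ ∞) (T : Set Ω) :
    ∃ t ∈ s, T.indicator (1 : Ω → ℤ) t ≤ ⌊μ[|s].real T⌋ := by
  by_cases h : s ⊆ T
  · obtain ⟨t, hts⟩ := nonempty_of_measure_ne_zero hs₀
    have h1 : μ[|s].real T = 1 := by
      simp [Measure.real, cond_apply hs, Set.inter_eq_left.2 h, ENNReal.inv_mul_cancel hs₀ hs']
    exact ⟨t, hts, by simp [h1, h hts]⟩
  · obtain ⟨t, hts, htT⟩ := Set.not_subset.1 h
    exact ⟨t, hts, by simpa [htT] using Int.floor_nonneg.2 measureReal_nonneg⟩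

variable {c : ℝ → ℕ} (hc : Monotone c) (S : Set ℕ) {a b : ℝ} (hab : a < b)
include hc hab

lemma two_mul_ceil_cond_Ico_sub_le :
    2 * ⌈volume[|Set.Ico a b].real (c ⁻¹' S)⌉ - (c ⁻¹' S).indicator (1 : ℝ → ℤ) a -
      (c ⁻¹' S).indicator 1 b ≤ (c b : ℤ) - c a := by
  obtain ⟨t, ht, hceil⟩ := exists_mem_ceil_cond_le_indicator volume measurableSet_Ico
    (Set.nonempty_Ico.2 hab) (c ⁻¹' S)
  have h_left := abs_le.1 (abs_indicator_preimage_sub_le hc S ht.1)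
  have h_right := abs_le.1 (abs_indicator_preimage_sub_le hc S ht.2.le)
  linarith

lemma sub_two_mul_floor_cond_Ico_le :
    (c ⁻¹' S).indicator (1 : ℝ → ℤ) a + (c ⁻¹' S).indicator 1 b -
      2 * ⌊volume[|Set.Ico a b].real (c ⁻¹' S)⌋ ≤ (c b : ℤ) - c a := by
  obtain ⟨t, ht, hfloor⟩ := exists_mem_indicator_le_floor_cond (μ := volume) (s := Set.Ico a b)
    measurableSet_Ico (by simp [hab]) measure_Ico_lt_top.ne (c ⁻¹' S)
  have h_left := abs_le.1 (abs_indicator_preimage_sub_le hc S ht.1)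
  have h_right := abs_le.1 (abs_indicator_preimage_sub_le hc S ht.2.le)
  linarith

end Cuts

section Summation

/-- The `e`-terms cancel between consecutive indices, except at the two ends. -/
lemma two_mul_sum_even_sub_two_mul_sum_odd_le {C e X Y : ℕ → ℤ}
    (hX : ∀ j, 2 * X j - e j - e (j + 1) ≤ C (j + 1) - C j)
    (hY : ∀ j, e j + e (j + 1) - 2 * Y j ≤ C (j + 1) - C j) (N : ℕ) :
    2 * ∑ t ∈ Finset.range N, X (2 * t) - 2 * ∑ t ∈ Finset.range N, Y (2 * t + 1)
      - e 0 + e (2 * N) ≤ C (2 * N) - C 0 := by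
  induction N with
  | zero => simp
  | succ N ih =>
    rw [Finset.sum_range_succ, Finset.sum_range_succ, show 2 * (N + 1) = 2 * N + 1 + 1 by ring]
    linarith [hX (2 * N), hY (2 * N + 1)]

lemma natCast_le_sub_of_one_le_sub {C : ℕ → ℤ} {j r : ℕ}
    (h : ∀ s < r, 1 ≤ C (j + s + 1) - C (j + s)) : (r : ℤ) ≤ C (j + r) - C j := by
  induction r with
  | zero => simp
  | succ r ih =>
    have h_step := h r r.lt_succ_self
    have h_init := ih fun s hs => h s (hs.trans r.lt_succ_self)
    rw [← add_assoc]
    push_cast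
    linarith

lemma sum_range_mul_eq_sum_finProdFinEquiv {M : Type*} [AddCommMonoid M] (f : ℕ → M) (a q : ℕ) :
    ∑ t ∈ Finset.range (a * q), f t = ∑ i : Fin a, ∑ s : Fin q, f (finProdFinEquiv (i, s)) := by
  rw [← Fin.sum_univ_eq_sum_range, ← Fintype.sum_prod_type',
    ← Equiv.sum_comp finProdFinEquiv fun t => f t]

lemma mul_le_sum_range_of_forall_block {f : ℕ → ℤ} {a q : ℕ} {B : ℤ}
    (h : ∀ i : Fin a, B ≤ ∑ s : Fin q, f (finProdFinEquiv (i, s))) :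
    a * B ≤ ∑ t ∈ Finset.range (a * q), f t := by
  rw [sum_range_mul_eq_sum_finProdFinEquiv]
  simpa using Finset.card_nsmul_le_sum Finset.univ _ B fun i _ => h i

lemma sum_range_mul_le_of_forall_block {f : ℕ → ℤ} {a q : ℕ} {B : ℤ}
    (h : ∀ i : Fin a, ∑ s : Fin q, f (finProdFinEquiv (i, s)) ≤ B) :
    ∑ t ∈ Finset.range (a * q), f t ≤ a * B := by
  rw [sum_range_mul_eq_sum_finProdFinEquiv]
  simpa using Finset.sum_le_card_nsmul Finset.univ _ B fun i _ => h i

end Summation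

section Alternating

/-- The alternating arrangement: `a` measures spread over `q₁` even cells each, `b` measures spread
over `q₂` odd cells each, and `r` measures each living on a single cell of its own, to the right of
all the others. It is meant for `a * q₁ = b * q₂`, when even and odd cells are equally many. -/
noncomputable def alternatingMeasure (x : ℕ → ℝ) (a q₁ b q₂ r : ℕ) :
    Fin a ⊕ Fin b ⊕ Fin r → Measure ℝ
  | .inl i => cellAverage x fun s : Fin q₁ => 2 * finProdFinEquiv (i, s)
  | .inr (.inl i) => cellAverage x fun s : Fin q₂ => 2 * finProdFinEquiv (i, s) + 1
  | .inr (.inr s) => cellAverage x fun _ : Fin 1 => 2 * (a * q₁) + s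

variable {x : ℕ → ℝ} (hx : StrictMono x) (hx_mem : ∀ j, x j ∈ Set.Icc 0 1)
include hx hx_mem

lemma AchievableWithCuts.sum_ceil_sub_sum_floor_le {m : ℕ} {A : Set ℝ}
    (hA : AchievableWithCuts m A) {N r : ℕ}
    (htail : ∀ s < r, cellFraction x A (2 * N + s) ∈ Set.Ioo 0 1) :
    2 * ∑ t ∈ Finset.range N, ⌈cellFraction x A (2 * t)⌉ -
      2 * ∑ t ∈ Finset.range N, ⌊cellFraction x A (2 * t + 1)⌋ + r - 1 ≤ m := by
  obtain ⟨c, S, hc, hc₀, hc₁, hAS⟩ := hA.exists_monotone_count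
  rw [cellFraction_congr_ae hAS] at htail ⊢
  set e : ℕ → ℤ := fun j => (c ⁻¹' S).indicator 1 (x j)
  set C : ℕ → ℤ := fun j => c (x j)
  have hceil (j : ℕ) : 2 * ⌈cellFraction x (c ⁻¹' S) j⌉ - e j - e (j + 1) ≤ C (j + 1) - C j :=
    two_mul_ceil_cond_Ico_sub_le hc S (hx j.lt_succ_self)
  have hfloor (j : ℕ) : e j + e (j + 1) - 2 * ⌊cellFraction x (c ⁻¹' S) j⌋ ≤ C (j + 1) - C j :=
    sub_two_mul_floor_cond_Ico_le hc S (hx j.lt_succ_self)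
  have h_alternating := two_mul_sum_even_sub_two_mul_sum_odd_le hceil hfloor N
  have h_tail : (r : ℤ) ≤ C (2 * N + r) - C (2 * N) :=
    natCast_le_sub_of_one_le_sub fun s hs => by
      have h_ceil := Int.ceil_pos.2 (htail s hs).1
      have h_floor := Int.floor_lt.2 ((htail s hs).2.trans_eq Int.cast_one.symm)
      linarith [hceil (2 * N + s), hfloor (2 * N + s)]
  have he₀ : e 0 ≤ 1 := Set.indicator_le_self' (fun _ _ => zero_le_one) _
  have heN : 0 ≤ e (2 * N) := Set.indicator_nonneg (fun _ _ => zero_le_one) _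
  have hC₀ : 1 ≤ C 0 := Nat.one_le_cast.2 (hc₀ _ (hx_mem 0).1)
  have hCm : C (2 * N + r) ≤ m + 1 :=
    Int.ofNat_le.2 (hc₁ _ ((hx (Nat.lt_succ_self _)).trans_le (hx_mem _).2))
  linarith

variable {a q₁ b q₂ r : ℕ}

lemma isStepMeasure_alternatingMeasure (hq₁ : 0 < q₁) (hq₂ : 0 < q₂) :
    ∀ i, IsStepMeasure (alternatingMeasure x a q₁ b q₂ r i)
  | .inl _ => isStepMeasure_cellAverage hx hx_mem hq₁ _
  | .inr (.inl _) => isStepMeasure_cellAverage hx hx_mem hq₂ _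
  | .inr (.inr _) => isStepMeasure_cellAverage hx hx_mem one_pos _

lemma AchievableWithCuts.le_of_alternatingMeasure {m : ℕ} {A : Set ℝ}
    (hA : AchievableWithCuts m A) (hab : a * q₁ = b * q₂) {p₁ p₂ : ℤ}
    (heven : ∀ i, p₁ < q₁ * (alternatingMeasure x a q₁ b q₂ r (.inl i)).real A)
    (hodd : ∀ i, q₂ * (alternatingMeasure x a q₁ b q₂ r (.inr (.inl i))).real A < p₂)
    (hsingle : ∀ s, (alternatingMeasure x a q₁ b q₂ r (.inr (.inr s))).real A ∈ Set.Ioo 0 1) :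
    2 * (a * (p₁ + 1)) - 2 * (b * (p₂ - 1)) + r - 1 ≤ m := by
  have h_even : a * (p₁ + 1) ≤ ∑ t ∈ Finset.range (a * q₁), ⌈cellFraction x A (2 * t)⌉ :=
    mul_le_sum_range_of_forall_block (f := fun t => ⌈cellFraction x A (2 * t)⌉) fun i =>
      add_one_le_sum_ceil_cellFraction (heven i)
  have h_odd : ∑ t ∈ Finset.range (b * q₂), ⌊cellFraction x A (2 * t + 1)⌋ ≤ b * (p₂ - 1) :=
    sum_range_mul_le_of_forall_block (f := fun t => ⌊cellFraction x A (2 * t + 1)⌋) fun i =>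
      sum_floor_cellFraction_le_sub_one (hodd i)
  have h_tail : ∀ s < r, cellFraction x A (2 * (a * q₁) + s) ∈ Set.Ioo 0 1 := fun s hs => by
    have h := mul_real_cellAverage x (fun _ : Fin 1 => 2 * (a * q₁) + s) A
    rw [Nat.cast_one, one_mul, Fin.sum_univ_one] at h
    exact h ▸ hsingle ⟨s, hs⟩
  have h_cuts := hA.sum_ceil_sub_sum_floor_le hx hx_mem h_tail
  rw [← hab] at h_odd
  linarith

end Alternating

lemma two_mul_sub_one_mul_div_sub_le {k : ℕ} (hk : 0 < k) (n : ℕ) :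
    2 * ((k : ℝ) - 1) * n / k - k ≤ 2 * ((k : ℝ) - 1) * (n / k : ℕ) + (n % k : ℕ) - 1 := by
  have hn : (n : ℝ) = (n / k : ℕ) * k + (n % k : ℕ) := by
    exact_mod_cast (Nat.div_add_mod' n k).symm
  have hr : ((n % k : ℕ) : ℝ) + 1 ≤ k := by exact_mod_cast Nat.mod_lt n hk
  rw [sub_le_iff_le_add, div_le_iff₀ (by positivity), hn]
  nlinarith [mul_nonneg (Nat.cast_nonneg (α := ℝ) k) (sub_nonneg.2 hr),
    Nat.cast_nonneg (α := ℝ) (n % k)]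

theorem exists_isStepMeasure_forall_cuts_lower_bound {p₁ q₁ p₂ q₂ : ℕ} (hq₁ : 0 < q₁) (hq₂ : 0 < q₂)
    (hp₂ : p₂ ≤ q₂) (hdet : q₁ * p₂ = q₂ * p₁ + 1) {k : ℕ} (hk : q₁ + q₂ = k) (n : ℕ) :
    ∃ μ : Fin n → Measure ℝ, (∀ i, IsStepMeasure (μ i)) ∧
      ∀ (m : ℕ) (A : Set ℝ), AchievableWithCuts m A →
        (∀ i, (μ i).real A ∈ Set.Ioo ((p₁ : ℝ) / q₁) ((p₂ : ℝ) / q₂)) →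
        2 * ((k : ℤ) - 1) * (n / k : ℕ) + (n % k : ℕ) - 1 ≤ m := by
  obtain ⟨x, hx, hx_mem, -⟩ := exists_seq_strictMono_tendsto' (zero_lt_one' ℝ)
  replace hx_mem (j : ℕ) : x j ∈ Set.Icc 0 1 := Set.Ioo_subset_Icc_self (hx_mem j)
  set g := n / k
  set r := n % k
  have hcard : Fintype.card (Fin (g * q₂) ⊕ Fin (g * q₁) ⊕ Fin r) = n := by
    simp only [Fintype.card_sum, Fintype.card_fin]
    rw [← add_assoc, ← mul_add, add_comm q₂, hk, Nat.div_add_mod']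
  let φ := Fintype.equivFinOfCardEq hcard
  refine ⟨fun i => alternatingMeasure x _ q₁ _ q₂ _ (φ.symm i),
    fun i => isStepMeasure_alternatingMeasure hx hx_mem hq₁ hq₂ _, fun m A hA hval => ?_⟩
  rw [φ.symm.forall_congr_right
    (q := fun i => (alternatingMeasure x _ q₁ _ q₂ _ i).real A ∈ Set.Ioo _ _)] at hval
  have h_cuts := hA.le_of_alternatingMeasure hx hx_mem (by ring) (p₁ := p₁) (p₂ := p₂)
    (fun i => (div_lt_iff₀' (by positivity)).1 (hval _).1)
    (fun i => (lt_div_iff₀' (by positivity)).1 (hval _).2)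
    (fun s => Set.Ioo_subset_Ioo (by positivity)
      (div_le_one_of_le₀ (by exact_mod_cast hp₂) (by positivity)) (hval _))
  have hdet' : (g : ℤ) * (q₁ * p₂) = g * (q₂ * p₁ + 1) := by exact_mod_cast congrArg (g * ·) hdet
  subst hk
  push_cast at h_cuts ⊢
  linarith

/-- Approximate version of the lower bound: with `α = l/k`, `α1` the
largest rational in `[0,1]` of reduced denominator `< k` below `α`, `α2` the smallest
such rational above `α`, and `0 ≤ ε < min(α − α1, α2 − α)`, for every `n ≥ 1` there are
`n` step-function measures so that any set achievable with `m` cuts on which every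
measure is within `ε` of `l/k` requires `m ≥ 2(k−1)n/k − k`. -/
theorem icd_approx_lower_bound
    (l k : ℕ) (hl : 1 ≤ l) (hlk : l < k) (hk : 2 ≤ k) (hcop : Nat.Coprime l k)
    (α α1 α2 : ℚ) (hα : α = (l : ℚ) / (k : ℚ))
    (hα1mem : 0 ≤ α1 ∧ α1 ≤ 1 ∧ α1.den < k)
    (hα1lt : α1 < α)
    (hα1max : ∀ q : ℚ, 0 ≤ q → q ≤ 1 → q.den < k → q < α → q ≤ α1)
    (hα2mem : 0 ≤ α2 ∧ α2 ≤ 1 ∧ α2.den < k)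
    (hα2gt : α < α2)
    (hα2min : ∀ q : ℚ, 0 ≤ q → q ≤ 1 → q.den < k → α < q → α2 ≤ q)
    (ε : ℝ) (hε0 : 0 ≤ ε)
    (hε : ε < min (((α - α1 : ℚ) : ℝ)) (((α2 - α : ℚ) : ℝ)))
    (n : ℕ) (hn : 0 < n) :
    ∃ μ : Fin n → Measure ℝ, (∀ i, IsStepMeasure (μ i)) ∧
      ∀ (m : ℕ) (A : Set ℝ), AchievableWithCuts m A →
        (∀ i, |(μ i A).toReal - (l : ℝ) / (k : ℝ)| ≤ ε) →
        2 * ((k : ℝ) - 1) * (n : ℝ) / (k : ℝ) - (k : ℝ) ≤ (m : ℝ) := by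
  obtain ⟨p₁, q₁, p₂, q₂, hq₁, hq₂, hqk, hp₂, hdet, hlt₁, hlt₂⟩ :=
    exists_farey_neighbours hlk hk hcop
  obtain ⟨μ, hμ, hcuts⟩ := exists_isStepMeasure_forall_cuts_lower_bound hq₁ hq₂ hp₂ hdet hqk n
  refine ⟨μ, hμ, fun m A hA hval => (two_mul_sub_one_mul_div_sub_le (by omega) n).trans ?_⟩
  rw [← hα] at hlt₁ hlt₂
  have hle₁ : (p₁ / q₁ : ℚ) ≤ α1 :=
    hα1max _ (by positivity) ((hlt₁.trans hα2gt).le.trans hα2mem.2.1)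
      ((den_natCast_div_natCast_le p₁ hq₁).trans_lt (by omega)) hlt₁
  have hle₂ : α2 ≤ (p₂ / q₂ : ℚ) :=
    hα2min _ (by positivity) (div_le_one_of_le₀ (by exact_mod_cast hp₂) (by positivity))
      ((den_natCast_div_natCast_le p₂ hq₂).trans_lt (by omega)) hlt₂
  have hmem (i : Fin n) : (μ i).real A ∈ Set.Ioo ((p₁ : ℝ) / q₁) ((p₂ : ℝ) / q₂) := by
    obtain ⟨hε₁, hε₂⟩ := lt_min_iff.1 hε
    have hle₁' : (p₁ / q₁ : ℝ) ≤ α1 := by simpa using (Rat.cast_le (K := ℝ)).2 hle₁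
    have hle₂' : (α2 : ℝ) ≤ p₂ / q₂ := by simpa using (Rat.cast_le (K := ℝ)).2 hle₂
    have hdist := abs_le.1 (hval i)
    rw [← Measure.real] at hdist
    push_cast [hα] at hε₁ hε₂
    constructor <;> linarith
  simpa only [Int.cast_sub, Int.cast_add, Int.cast_mul, Int.cast_natCast, Int.cast_one,
    Int.cast_ofNat] using (Int.cast_le (R := ℝ)).2 (hcuts m A hA hmem)
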